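/- There exists n₀ such that for every odd n ≥ n₀ and every positive integer m the following holds: if F ⊆ 2^[n] is 2-Sperner and the number of sets G ⊆ [n] with G ∉ F and |G| ∈ {⌊n/2⌋, ⌈n/2⌉} is at least m, then |F| ≤ Σ(n,2) − 1.9·m/n. -/

import Mathlib

/-- A family is 2-Sperner if it contains no chain of three of its members. -/
def TwoSperner {n : ℕ} (F : Finset (Finset (Fin n))) : Prop :=
  ∀ A ∈ F, ∀ B ∈ F, ∀ C ∈ F, ¬ (A ⊂ B ∧ B ⊂ C)

def Sigma2 (n : ℕ) : ℕ := n.choose (n / 2) + n.choose (n / 2 + 1)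

def levelFam (n k : ℕ) : Finset (Finset (Fin n)) :=
  Finset.univ.filter (fun S => S.card = k)

/-!
Write `n = 2k + 1`. A 2-Sperner family is a union of two antichains, so by the LYM inequality the
sum of `1 / C(n, |s|)` over its members is at most `2`. A set in one of the two middle levels
contributes `1 / C(n, k)`; any other set contributes at least `(k + 2) / k` times as much, because
`C(n, k - 1) / C(n, k) = k / (k + 2)`. If `F` misses `b` middle sets and contains `a` other sets,
this gives `(k + 2) a ≤ k b`, so `|F|` falls short of `Σ(n,2)` by
`b - a ≥ 2b / (k + 2) = 4b / (n + 3)`.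
-/

section Binomial

theorem choose_le_choose_of_le_half {n i j : ℕ} (hij : i ≤ j) (hj : j ≤ n / 2) :
    n.choose i ≤ n.choose j := by
  induction hij using Nat.decreasingInduction with
  | self => exact le_rfl
  | of_succ i hi ih => exact (Nat.choose_le_succ_of_lt_half_left (by lia)).trans ih

theorem choose_mul_sub_le_choose_succ_mul {n i j : ℕ} (hij : i ≤ j) (hj : j ≤ n / 2) :
    n.choose i * (n - j) ≤ n.choose (j + 1) * (j + 1) :=
  calc n.choose i * (n - j) ≤ n.choose j * (n - j) :=
        Nat.mul_le_mul_right _ (choose_le_choose_of_le_half hij hj)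
    _ = n.choose (j + 1) * (j + 1) := (Nat.choose_succ_right_eq n j).symm

theorem choose_mul_add_two_le_of_lt {k j : ℕ} (hj : j < k) :
    (2 * k + 1).choose j * (k + 2) ≤ (2 * k + 1).choose k * k := by
  obtain ⟨r, rfl⟩ : ∃ r, k = r + 1 := ⟨k - 1, by lia⟩
  have hgap := choose_mul_sub_le_choose_succ_mul (n := 2 * (r + 1) + 1)
    (show j ≤ r by lia) (by lia)
  rwa [show 2 * (r + 1) + 1 - r = r + 1 + 2 by lia] at hgap

theorem choose_mul_add_two_le_of_ne {k j : ℕ} (hk : j ≠ k) (hk' : j ≠ k + 1) :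
    (2 * k + 1).choose j * (k + 2) ≤ (2 * k + 1).choose k * k := by
  rcases lt_or_gt_of_ne hk with hlow | hhigh
  · exact choose_mul_add_two_le_of_lt hlow
  rcases le_or_gt j (2 * k + 1) with hj | hj
  · rw [← Nat.choose_symm hj]
    exact choose_mul_add_two_le_of_lt (by lia)
  · simp [Nat.choose_eq_zero_of_lt hj]

end Binomial

section Levels

variable {n k : ℕ} {s : Finset (Fin n)}

theorem mem_levelFam : s ∈ levelFam n k ↔ s.card = k := by
  simp [levelFam]

theorem card_levelFam (n k : ℕ) : (levelFam n k).card = n.choose k := by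
  simp [levelFam, Finset.univ_filter_card_eq]

theorem disjoint_levelFam {l : ℕ} (hkl : k ≠ l) : Disjoint (levelFam n k) (levelFam n l) :=
  Finset.disjoint_left.2 fun _ hk hl => hkl ((mem_levelFam.1 hk).symm.trans (mem_levelFam.1 hl))

/-- The sets whose size is `⌊n/2⌋` or `⌈n/2⌉`; for odd `n`, the two largest levels. -/
def middleLevels (n : ℕ) : Finset (Finset (Fin n)) :=
  levelFam n (n / 2) ∪ levelFam n ((n + 1) / 2)

theorem mem_middleLevels {s : Finset (Fin (2 * k + 1))} :
    s ∈ middleLevels (2 * k + 1) ↔ s.card = k ∨ s.card = k + 1 := by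
  rw [middleLevels, Finset.mem_union, mem_levelFam, mem_levelFam,
    show (2 * k + 1) / 2 = k by lia, show (2 * k + 1 + 1) / 2 = k + 1 by lia]

theorem card_middleLevels (hn : Odd n) : (middleLevels n).card = Sigma2 n := by
  have hceil : (n + 1) / 2 = n / 2 + 1 := by grind
  rw [middleLevels, hceil, Finset.card_union_of_disjoint (disjoint_levelFam (by lia)),
    card_levelFam, card_levelFam, Sigma2]

theorem sigma2_two_mul_add_one (k : ℕ) : Sigma2 (2 * k + 1) = 2 * (2 * k + 1).choose k := by
  rw [Sigma2, show (2 * k + 1) / 2 = k by lia, Nat.choose_symm_half,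
    ← two_mul]

end Levels

namespace TwoSperner

variable {n k : ℕ} {F : Finset (Finset (Fin n))}

theorem isAntichain_not_minimal (hF : TwoSperner F) :
    IsAntichain (· ⊆ ·) {s | s ∈ F ∧ ¬ Minimal (· ∈ F) s} := by
  rintro s ⟨hs, hmin⟩ t ⟨ht, -⟩ hne hst
  obtain ⟨r, hrs, hr⟩ := (not_minimal_iff_exists_lt hs).1 hmin
  exact hF r hr s hs t ht ⟨hrs, hst.ssubset_of_ne hne⟩

theorem sum_inv_choose_le_two (hF : TwoSperner F) :
    ∑ s ∈ F, (n.choose s.card : ℝ)⁻¹ ≤ 2 := by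
  classical
  have lym (G : Finset (Finset (Fin n))) (hG : IsAntichain (· ⊆ ·) (G : Set (Finset (Fin n)))) :
      ∑ s ∈ G, (n.choose s.card : ℝ)⁻¹ ≤ 1 := by
    simpa using Finset.lubell_yamamoto_meshalkin_inequality_sum_inv_choose (𝕜 := ℝ) hG
  have hmin : ∑ s ∈ F with Minimal (· ∈ F) s, (n.choose s.card : ℝ)⁻¹ ≤ 1 :=
    lym _ ((setOfPred_minimal_antichain (· ∈ F)).subset fun _ hs => (Finset.mem_filter.1 hs).2)
  have hnonmin : ∑ s ∈ F with ¬ Minimal (· ∈ F) s, (n.choose s.card : ℝ)⁻¹ ≤ 1 :=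
    lym _ (hF.isAntichain_not_minimal.subset fun _ hs => Finset.mem_filter.1 hs)
  rw [← Finset.sum_filter_add_sum_filter_not F (Minimal (· ∈ F))]
  linarith

theorem sum_le_two_mul_of_choose_mul_le (hF : TwoSperner F) {w : Finset (Fin n) → ℕ} {N : ℕ}
    (hw : ∀ s ∈ F, n.choose s.card * w s ≤ N) : ∑ s ∈ F, w s ≤ 2 * N := by
  have hweight : ∀ s ∈ F, (w s : ℝ) ≤ (n.choose s.card : ℝ)⁻¹ * N := fun s hs => by
    have hpos : 0 < n.choose s.card := Nat.choose_pos (card_finset_fin_le s)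
    rw [le_inv_mul_iff₀ (by exact_mod_cast hpos)]
    exact_mod_cast hw s hs
  have hsum : (∑ s ∈ F, w s : ℝ) ≤ 2 * N :=
    calc (∑ s ∈ F, w s : ℝ) ≤ ∑ s ∈ F, (n.choose s.card : ℝ)⁻¹ * N := Finset.sum_le_sum hweight
      _ = (∑ s ∈ F, (n.choose s.card : ℝ)⁻¹) * N := (Finset.sum_mul ..).symm
      _ ≤ 2 * N := by gcongr; exact hF.sum_inv_choose_le_two
  exact_mod_cast hsum

theorem card_inter_middleLevels_mul_add_card_sdiff_mul_le
    {F : Finset (Finset (Fin (2 * k + 1)))} (hF : TwoSperner F) :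
    (F ∩ middleLevels (2 * k + 1)).card * k + (F \ middleLevels (2 * k + 1)).card * (k + 2) ≤
      Sigma2 (2 * k + 1) * k := by
  have hw : ∀ s ∈ F, (2 * k + 1).choose s.card *
      (if s ∈ middleLevels (2 * k + 1) then k else k + 2) ≤ (2 * k + 1).choose k * k := by
    intro s _
    split_ifs with hs
    · rcases mem_middleLevels.1 hs with h | h
      · rw [h]
      · rw [h, Nat.choose_symm_half]
    · obtain ⟨hk, hk'⟩ := not_or.1 (mem_middleLevels.not.1 hs)
      exact choose_mul_add_two_le_of_ne hk hk'
  calc (F ∩ middleLevels (2 * k + 1)).card * k + (F \ middleLevels (2 * k + 1)).card * (k + 2)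
      = ∑ s ∈ F, if s ∈ middleLevels (2 * k + 1) then k else k + 2 := by
        simp [Finset.sum_ite, Finset.filter_mem_eq_inter, Finset.filter_notMem_eq_sdiff]
    _ ≤ 2 * ((2 * k + 1).choose k * k) := hF.sum_le_two_mul_of_choose_mul_le hw
    _ = Sigma2 (2 * k + 1) * k := by rw [sigma2_two_mul_add_one, mul_assoc]

end TwoSperner

theorem one_point_nine_mul_div_le_four_mul_div_add_three {x m b : ℝ}
    (hx : 3 ≤ x) (hb : 0 ≤ b) (hmb : m ≤ b) :
    1.9 * m / x ≤ 4 * b / (x + 3) :=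
  calc 1.9 * m / x ≤ 1.9 * b / x := by gcongr
    _ ≤ 4 * b / (x + 3) := by
        rw [div_le_div_iff₀ (by positivity) (by positivity)]
        nlinarith [mul_nonneg hb (sub_nonneg.2 hx)]

theorem two_sperner_stab_odd_missing_general {n : ℕ} (hn : Odd n)
    {F : Finset (Finset (Fin n))} (hF : TwoSperner F) :
    (F.card : ℝ) ≤ Sigma2 n - 4 * (middleLevels n \ F).card / (n + 3) := by
  obtain ⟨k, rfl⟩ := hn
  set M := middleLevels (2 * k + 1)
  have hweighted : ((F ∩ M).card * k + (F \ M).card * (k + 2) : ℝ) ≤ Sigma2 (2 * k + 1) * k := by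
    exact_mod_cast hF.card_inter_middleLevels_mul_add_card_sdiff_mul_le
  have hF_card : ((F ∩ M).card + (F \ M).card : ℝ) = F.card := by
    exact_mod_cast Finset.card_inter_add_card_sdiff F M
  have hM_card : ((F ∩ M).card + (M \ F).card : ℝ) = Sigma2 (2 * k + 1) := by
    rw [Finset.inter_comm, ← card_middleLevels (odd_two_mul_add_one k)]
    exact_mod_cast Finset.card_inter_add_card_sdiff M F
  have hdeficit : 2 * ((M \ F).card : ℝ) ≤ (Sigma2 (2 * k + 1) - F.card) * (k + 2) := by
    rw [← hM_card] at hweighted ⊢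
    rw [← hF_card]
    linarith
  rw [le_sub_comm, div_le_iff₀ (by positivity)]
  push_cast
  linarith

/-- For odd `n`: if `F` is 2-Sperner and at least `m` sets of size `⌊n/2⌋` or `⌈n/2⌉` are
missing from `F`, then `|F| ≤ Σ(n,2) − 1.9·m/n`. -/
theorem two_sperner_stab_odd_missing :
    ∃ n₀ : ℕ, ∀ n : ℕ, n₀ ≤ n → Odd n → ∀ m : ℕ, 1 ≤ m →
      ∀ F : Finset (Finset (Fin n)), TwoSperner F →
      m ≤ ((levelFam n (n / 2) ∪ levelFam n ((n + 1) / 2)) \ F).card →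
      (F.card : ℝ) ≤ (Sigma2 n : ℝ) - 1.9 * m / n := by
  exact ⟨3, fun n hn hodd m _ F hF hm => (two_sperner_stab_odd_missing_general hodd hF).trans <|
    sub_le_sub_left (one_point_nine_mul_div_le_four_mul_div_add_three (by exact_mod_cast hn)
      (Nat.cast_nonneg _) (by exact_mod_cast hm)) _⟩
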